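/- Let S be a finite state space and E a row-stochastic transition matrix on S that is ergodic (there exists t ≥ 1 such that every entry of the matrix power E^t is strictly positive), with stationary distribution π (a strictly positive probability vector satisfying π E = π). Let T = min{ t ≥ 1 : for every probability distribution q on S, the total variation distance between q E^t and π is at most 1/8 } be the mixing time, where the total variation distance between two vectors u, w indexed by S is max over subsets A ⊆ S of |Σ_{i∈A} u_i − Σ_{i∈A} w_i|, and let ‖u‖_π = sqrt( Σ_{i∈S} u_i² / π(i) ). Then there exists a constant c > 0 (independent of μ and δ) such that the following holds: for every such chain, every initial probability distribution φ on S, every t ≥ 1, every family of weight functions f_1, …, f_t : S → [0,1] satisfying Σ_{v∈S} π(v) f_i(v) = μ for all i, and every δ with 0 ≤ δ ≤ 1, the t-step random walk (V_1, …, V_t) on E started from φ (whose law assigns to a path (v_1,…,v_t) probability φ(v_1) Π_{s=1}^{t−1} E_{v_s, v_{s+1}}) satisfies Pr[ Σ_{i=1}^t f_i(V_i) ≤ (1 − δ) μ t ] ≤ c ‖φ‖_π exp( − δ² μ t / (72 T) ). -/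

import Mathlib

open Finset

set_option linter.unusedSectionVars false
set_option linter.deprecated false

namespace MC
variable {S : Type} [Fintype S] [DecidableEq S]

lemma l1_of_tv (m π : S → ℝ)
    (h : ∀ A : Finset S, |∑ i ∈ A, m i - ∑ i ∈ A, π i| ≤ 1 / 8) :
    ∑ j, |m j - π j| ≤ 1 / 4 := by
  have h1 := h (univ.filter fun j => π j ≤ m j)
  have h2 := h (univ.filter fun j => ¬ π j ≤ m j)
  rw [← sum_filter_add_sum_filter_not univ (fun j => π j ≤ m j)]
  have e1 : ∑ j ∈ univ.filter (fun j => π j ≤ m j), |m j - π j|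
      = ∑ j ∈ univ.filter (fun j => π j ≤ m j), (m j - π j) := by
    apply sum_congr rfl
    intro j hj
    simp only [mem_filter, mem_univ, true_and] at hj
    exact abs_of_nonneg (by linarith)
  have e2 : ∑ j ∈ univ.filter (fun j => ¬ π j ≤ m j), |m j - π j|
      = ∑ j ∈ univ.filter (fun j => ¬ π j ≤ m j), (-(m j - π j)) := by
    apply sum_congr rfl
    intro j hj
    simp only [mem_filter, mem_univ, true_and] at hj
    exact abs_of_nonpos (by linarith)
  rw [e1, e2, sum_sub_distrib, sum_neg_distrib, sum_sub_distrib]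
  have := abs_le.1 h1
  have := abs_le.1 h2
  linarith [this.1]

lemma contraction (M : Matrix S S ℝ) (π : S → ℝ)
    (hM0 : ∀ i j, 0 ≤ M i j) (hM1 : ∀ i, ∑ j, M i j = 1)
    (hπ : ∀ i, 0 < π i) (hπ1 : ∑ i, π i = 1) (hst : ∀ j, ∑ i, π i * M i j = π j)
    (hl : ∀ k, ∑ j, |M k j - π j| ≤ 1 / 4) (g : S → ℝ) (m : ℝ) (hm : m = ∑ i, π i * g i) :
    ∑ k, π k * (∑ j, M k j * g j - m) ^ 2 ≤ 1 / 2 * ∑ j, π j * (g j - m) ^ 2 := by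
  have e : ∀ k, ∑ j, M k j * g j - m = ∑ j, (M k j - π j) * (g j - m) := by
    intro k
    have : ∀ j, (M k j - π j) * (g j - m) = M k j * g j - π j * g j - M k j * m + π j * m := by
      intro j; ring
    simp_rw [this, sum_add_distrib, sum_sub_distrib, ← sum_mul, hM1, hπ1, ← hm]
    ring
  have step : ∀ k, (∑ j, M k j * g j - m) ^ 2
      ≤ 1 / 4 * ∑ j, |M k j - π j| * (g j - m) ^ 2 := by
    intro k
    rw [e]
    have := sum_sq_le_sum_mul_sum_of_sq_eq_mul univ (r := fun j => (M k j - π j) * (g j - m))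
      (f := fun j => |M k j - π j|) (g := fun j => |M k j - π j| * (g j - m) ^ 2)
      (fun _ _ => abs_nonneg _) (fun _ _ => by positivity)
      (fun j _ => by rw [← mul_assoc, ← abs_mul, abs_mul_self]; ring)
    refine this.trans ?_
    exact mul_le_mul_of_nonneg_right (hl k) (sum_nonneg fun _ _ => by positivity)
  calc ∑ k, π k * (∑ j, M k j * g j - m) ^ 2
      ≤ ∑ k, π k * (1 / 4 * ∑ j, |M k j - π j| * (g j - m) ^ 2) :=
        sum_le_sum fun k _ => mul_le_mul_of_nonneg_left (step k) (hπ k).le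
    _ = 1 / 4 * ∑ j, (∑ k, π k * |M k j - π j|) * (g j - m) ^ 2 := by
        simp_rw [mul_sum, sum_mul]
        rw [sum_comm]
        refine sum_congr rfl fun j _ => ?_
        rw [mul_sum]
        exact sum_congr rfl fun k _ => by ring
    _ ≤ 1 / 4 * ∑ j, (2 * π j) * (g j - m) ^ 2 := by
        refine mul_le_mul_of_nonneg_left (sum_le_sum fun j _ => ?_) (by norm_num)
        refine mul_le_mul_of_nonneg_right ?_ (sq_nonneg _)
        calc ∑ k, π k * |M k j - π j| ≤ ∑ k, π k * (M k j + π j) := by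
              refine sum_le_sum fun k _ => mul_le_mul_of_nonneg_left ?_ (hπ k).le
              rw [abs_le]; constructor <;> linarith [hM0 k j, hπ j]
          _ = 2 * π j := by
              simp_rw [mul_add, sum_add_distrib, ← sum_mul, hst, hπ1]; ring
    _ = _ := by
        rw [mul_sum, mul_sum]; exact sum_congr rfl fun k _ => by ring

lemma jensen (M : Matrix S S ℝ) (π : S → ℝ)
    (hM0 : ∀ i j, 0 ≤ M i j) (hM1 : ∀ i, ∑ j, M i j = 1)
    (hπ : ∀ i, 0 < π i) (hst : ∀ j, ∑ i, π i * M i j = π j) (g : S → ℝ) :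
    ∑ k, π k * (∑ j, M k j * g j) ^ 2 ≤ ∑ j, π j * g j ^ 2 := by
  have step : ∀ k, (∑ j, M k j * g j) ^ 2 ≤ ∑ j, M k j * g j ^ 2 := by
    intro k
    have := sum_sq_le_sum_mul_sum_of_sq_eq_mul univ (r := fun j => M k j * g j)
      (f := fun j => M k j) (g := fun j => M k j * g j ^ 2)
      (fun j _ => hM0 k j) (fun j _ => mul_nonneg (hM0 k j) (sq_nonneg _))
      (fun j _ => by ring)
    rwa [hM1, one_mul] at this
  calc ∑ k, π k * (∑ j, M k j * g j) ^ 2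
      ≤ ∑ k, π k * ∑ j, M k j * g j ^ 2 :=
        sum_le_sum fun k _ => mul_le_mul_of_nonneg_left (step k) (hπ k).le
    _ = ∑ j, (∑ k, π k * M k j) * g j ^ 2 := by
        simp_rw [mul_sum, sum_mul]
        rw [sum_comm]
        exact sum_congr rfl fun j _ => sum_congr rfl fun k _ => by ring
    _ = _ := by simp_rw [hst]

/-- Weights for which one mixing block does not increase the twisted norm. -/
structure Good (π w : S → ℝ) : Prop where
  pos : ∀ x, 0 < w x
  le : ∀ x, w x ≤ 2
  quad : ∀ u : S → ℝ, 1 / 4 * (∑ x, π x * u x) ^ 2 + 3 / 4 * ∑ x, π x * u x ^ 2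
    ≤ ∑ x, π x * (u x ^ 2 / w x)

lemma two_cs (a b c d : ℝ) (p q P Q : ℝ) (hp : b ^ 2 ≤ p * q) (hp0 : 0 ≤ p) (hq0 : 0 ≤ q)
    (h1 : a ^ 2 + 3 / 4 * p ≤ P) (h2 : c ^ 2 + 4 / 3 * q ≤ Q) (hd : d = a * c + b) :
    d ^ 2 ≤ P * Q := by
  have h3 : d ^ 2 ≤ (a ^ 2 + 3 / 4 * p) * (c ^ 2 + 4 / 3 * q) := by
    subst hd
    have key : 2 * (a * c * b) ≤ 4 / 3 * a ^ 2 * q + 3 / 4 * p * c ^ 2 := by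
      have h4 : (2 * (a * c * b)) ^ 2 ≤ (4 / 3 * a ^ 2 * q + 3 / 4 * p * c ^ 2) ^ 2 := by
        have : (a * c) ^ 2 * b ^ 2 ≤ (a * c) ^ 2 * (p * q) :=
          mul_le_mul_of_nonneg_left hp (sq_nonneg _)
        nlinarith [sq_nonneg (4 / 3 * a ^ 2 * q - 3 / 4 * p * c ^ 2)]
      exact le_of_sq_le_sq h4 (by positivity)
    nlinarith
  refine h3.trans ?_
  have : 0 ≤ a ^ 2 + 3 / 4 * p := by positivity
  have : 0 ≤ c ^ 2 + 4 / 3 * q := by positivity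
  exact mul_le_mul h1 h2 this (by linarith)

lemma block (M : Matrix S S ℝ) (π : S → ℝ)
    (hM0 : ∀ i j, 0 ≤ M i j) (hM1 : ∀ i, ∑ j, M i j = 1)
    (hπ : ∀ i, 0 < π i) (hπ1 : ∑ i, π i = 1) (hst : ∀ j, ∑ i, π i * M i j = π j)
    (hl : ∀ k, ∑ j, |M k j - π j| ≤ 1 / 4) (w w' : S → ℝ) (hw : Good π w) (hw' : Good π w')
    (G : S → ℝ) :
    ∑ k, π k * (w k * (∑ j, M k j * (w' j * G j)) ^ 2) ≤ ∑ k, π k * (w' k * G k ^ 2) := by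
  set H : S → ℝ := fun k => ∑ j, M k j * (w' j * G j) with hH
  set v : S → ℝ := fun j => w' j * G j with hv
  set u : S → ℝ := fun j => w j * H j with hu
  set ub := ∑ i, π i * u i with hub
  set vb := ∑ i, π i * v i with hvb
  have var : ∀ (g : S → ℝ) (m : ℝ), m = ∑ i, π i * g i →
      ∑ i, π i * (g i - m) ^ 2 = ∑ i, π i * g i ^ 2 - m ^ 2 := by
    intro g m hm
    have : ∀ i, π i * (g i - m) ^ 2 = π i * g i ^ 2 - 2 * m * (π i * g i) + m ^ 2 * π i := by
      intro i; ring
    simp_rw [this, sum_add_distrib, sum_sub_distrib, ← mul_sum, hπ1, ← hm]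
    ring
  have hc := contraction M π hM0 hM1 hπ hπ1 hst hl v vb hvb
  have hHm : ∑ k, π k * H k = vb := by
    simp only [hH, mul_sum]
    rw [sum_comm, hvb]
    refine sum_congr rfl fun j _ => ?_
    rw [← hst j, sum_mul]
    exact sum_congr rfl fun k _ => by ring
  have cs : (∑ k, π k * ((u k - ub) * (H k - vb))) ^ 2
      ≤ (∑ k, π k * (u k - ub) ^ 2) * (∑ k, π k * (H k - vb) ^ 2) :=
    sum_sq_le_sum_mul_sum_of_sq_eq_mul univ
      (fun k _ => mul_nonneg (hπ k).le (sq_nonneg _))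
      (fun k _ => mul_nonneg (hπ k).le (sq_nonneg _)) (fun k _ => by ring)
  set N := ∑ k, π k * (w k * H k ^ 2) with hN
  set N' := ∑ k, π k * (w' k * G k ^ 2) with hN'
  have eN : N = ub * vb + ∑ k, π k * ((u k - ub) * (H k - vb)) := by
    have : ∀ k, π k * ((u k - ub) * (H k - vb))
        = π k * (w k * H k ^ 2) - ub * (π k * H k) - vb * (π k * u k) + ub * vb * π k := by
      intro k; simp only [hu]; ring
    simp_rw [this, sum_add_distrib, sum_sub_distrib, ← mul_sum, hπ1, hHm]
    rw [← hub, ← hN]; ring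
  have q1 := hw.quad u
  have q2 := hw'.quad v
  have e1 : ∑ x, π x * (u x ^ 2 / w x) = N := by
    refine sum_congr rfl fun k _ => ?_
    have := (hw.pos k).ne'
    simp only [hu]; field_simp
  have e2 : ∑ x, π x * (v x ^ 2 / w' x) = N' := by
    refine sum_congr rfl fun k _ => ?_
    have := (hw'.pos k).ne'
    simp only [hv]; field_simp
  rw [e1, ← hub] at q1
  rw [e2, ← hvb] at q2
  have v1 := var u ub hub
  have v2 := var v vb hvb
  have n1 : 0 ≤ ∑ k, π k * (u k - ub) ^ 2 :=
    sum_nonneg fun k _ => mul_nonneg (hπ k).le (sq_nonneg _)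
  have n2 : 0 ≤ ∑ k, π k * (H k - vb) ^ 2 :=
    sum_nonneg fun k _ => mul_nonneg (hπ k).le (sq_nonneg _)
  have n3 : 0 ≤ ∑ k, π k * (v k - vb) ^ 2 :=
    sum_nonneg fun k _ => mul_nonneg (hπ k).le (sq_nonneg _)
  have fin := two_cs ub _ vb N _ _ N N' cs n1 n2 (by rw [v1]; linarith)
    (by
      have : ∑ k, π k * (H k - vb) ^ 2 ≤ 1 / 2 * ∑ j, π j * (v j - vb) ^ 2 := hc
      linarith) eN
  have hN0 : 0 ≤ N := sum_nonneg fun k _ =>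
    mul_nonneg (hπ k).le (mul_nonneg (hw.pos k).le (sq_nonneg _))
  have hN0' : 0 ≤ N' := sum_nonneg fun k _ =>
    mul_nonneg (hπ k).le (mul_nonneg (hw'.pos k).le (sq_nonneg _))
  by_contra hcon
  push Not at hcon
  nlinarith

/-- The exponential weights are good. -/
lemma good_exp (π f : S → ℝ) (μ r : ℝ) (hπ : ∀ i, 0 < π i) (hπ1 : ∑ i, π i = 1)
    (hf : ∀ v, 0 ≤ f v ∧ f v ≤ 1) (hμ : ∑ v, π v * f v = μ) (hr : 0 ≤ r) :
    Good π (fun x => Real.exp (r * μ / (1 + 5 * r) - r * f x)) := by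
  have hμ0 : 0 ≤ μ := by
    rw [← hμ]; exact sum_nonneg fun v _ => mul_nonneg (hπ v).le (hf v).1
  have hμ1 : μ ≤ 1 := by
    rw [← hμ, ← hπ1]
    exact sum_le_sum fun v _ => mul_le_of_le_one_right (hπ v).le (hf v).2
  set ε := r * μ / (1 + 5 * r) with hε
  have hε0 : 0 ≤ ε := by positivity
  have hε1 : 5 * ε < 1 := by
    rw [hε, ← mul_div_assoc, div_lt_one (by positivity)]; nlinarith
  set p := 1 - 4 * ε with hp
  have hp0 : 0 < p := by rw [hp]; linarith
  set a := r / (1 + r) with ha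
  have ha0 : 0 ≤ a := by positivity
  have ha1 : a < 1 := by rw [ha, div_lt_one (by positivity)]; linarith
  have hεa : ε * (1 + 4 * a) = a * μ := by
    rw [hε, ha]; field_simp; ring
  have hexp : Real.exp ε ≤ 1 / (1 - ε) := by
    rw [le_div_iff₀ (by linarith)]
    have h1 := Real.one_sub_le_exp_neg ε
    calc Real.exp ε * (1 - ε) ≤ Real.exp ε * Real.exp (-ε) :=
          mul_le_mul_of_nonneg_left h1 (Real.exp_pos _).le
      _ = 1 := by rw [← Real.exp_add]; simp
  have hD0 : ∀ x, 0 < 1 - a * f x := by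
    intro x
    nlinarith [(hf x).1, (hf x).2]
  have hD : ∀ x, Real.exp (-(r * f x)) ≤ 1 - a * f x := by
    intro x
    have h1 : r * f x + 1 ≤ Real.exp (r * f x) := Real.add_one_le_exp _
    have h0 : 0 ≤ r * f x := mul_nonneg hr (hf x).1
    rw [Real.exp_neg]
    have h2 : (Real.exp (r * f x))⁻¹ ≤ (r * f x + 1)⁻¹ := inv_anti₀ (by linarith) h1
    refine h2.trans ?_
    rw [inv_le_iff_one_le_mul₀ (by linarith)]
    have e : a * (1 + r) = r := by rw [ha]; field_simp
    have : (1 - a * f x) * (r * f x + 1) = 1 + a * f x * (r * (1 - f x)) := by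
      have : r * f x = a * (1 + r) * f x := by rw [e]
      linear_combination this
    rw [this]
    have : 0 ≤ a * f x * (r * (1 - f x)) :=
      mul_nonneg (mul_nonneg ha0 (hf x).1) (mul_nonneg hr (by linarith [(hf x).2]))
    linarith
  refine ⟨fun x => Real.exp_pos _, fun x => ?_, fun u => ?_⟩
  · have h1 : Real.exp (ε - r * f x) ≤ Real.exp ε :=
      Real.exp_le_exp.2 (by linarith [mul_nonneg hr (hf x).1])
    have : 1 / (1 - ε) ≤ 2 := by
      rw [div_le_iff₀ (by linarith)]; linarith
    linarith
  · -- reduce to D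
    have h1 : ∀ x, π x * (u x ^ 2 * ((1 - ε) / (1 - a * f x)))
        ≤ π x * (u x ^ 2 / Real.exp (ε - r * f x)) := by
      intro x
      refine mul_le_mul_of_nonneg_left ?_ (hπ x).le
      rw [div_eq_mul_inv (u x ^ 2)]
      refine mul_le_mul_of_nonneg_left ?_ (sq_nonneg _)
      have : Real.exp (ε - r * f x) ≤ (1 - a * f x) / (1 - ε) := by
        rw [sub_eq_add_neg, Real.exp_add]
        calc _ ≤ 1 / (1 - ε) * (1 - a * f x) :=
              mul_le_mul hexp (hD x) (Real.exp_pos _).le (by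
                apply div_nonneg <;> linarith)
          _ = _ := by ring
      have := inv_anti₀ (Real.exp_pos _) this
      rwa [inv_div] at this
    refine le_trans ?_ (sum_le_sum fun x _ => h1 x)
    -- Cauchy-Schwarz
    have hq : ∀ x, 0 < p + 3 * a * f x := fun x => by
      have := mul_nonneg ha0 (hf x).1
      nlinarith
    have cs : (∑ x, π x * u x) ^ 2 ≤
        (∑ x, π x * ((1 - a * f x) / (p + 3 * a * f x))) *
        (∑ x, π x * (u x ^ 2 * ((p + 3 * a * f x) / (1 - a * f x)))) := by
      refine sum_sq_le_sum_mul_sum_of_sq_eq_mul univ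
        (fun x _ => mul_nonneg (hπ x).le (div_nonneg (hD0 x).le (hq x).le))
        (fun x _ => mul_nonneg (hπ x).le (mul_nonneg (sq_nonneg _)
          (div_nonneg (hq x).le (hD0 x).le))) (fun x _ => ?_)
      have h1 := (hD0 x).ne'
      have h2 := (hq x).ne'
      generalize 1 - a * f x = d at h1 ⊢
      generalize p + 3 * a * f x = q at h2 ⊢
      field_simp
    have hs : ∑ x, π x * ((1 - a * f x) / (p + 3 * a * f x)) ≤ 1 := by
      have hpt : ∀ x, (1 - a * f x) / (p + 3 * a * f x)
          ≤ (1 - f x) * (1 / p) + f x * ((1 - a) / (p + 3 * a)) := by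
        intro x
        have hpa : 0 < p + 3 * a := by linarith
        rw [div_le_iff₀ (hq x)]
        have : ((1 - f x) * (1 / p) + f x * ((1 - a) / (p + 3 * a))) * (p + 3 * a * f x)
            = (1 - a * f x) + (3 + p) * 3 * a ^ 2 * (f x * (1 - f x)) / (p * (p + 3 * a)) := by
          field_simp
          ring
        rw [this]
        have : 0 ≤ (3 + p) * 3 * a ^ 2 * (f x * (1 - f x)) / (p * (p + 3 * a)) := by
          have := mul_nonneg (hf x).1 (sub_nonneg.2 (hf x).2)
          positivity
        linarith
      calc ∑ x, π x * ((1 - a * f x) / (p + 3 * a * f x))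
          ≤ ∑ x, π x * ((1 - f x) * (1 / p) + f x * ((1 - a) / (p + 3 * a))) :=
            sum_le_sum fun x _ => mul_le_mul_of_nonneg_left (hpt x) (hπ x).le
        _ = (1 - μ) * (1 / p) + μ * ((1 - a) / (p + 3 * a)) := by
            have : ∀ x, π x * ((1 - f x) * (1 / p) + f x * ((1 - a) / (p + 3 * a)))
              = (1 / p) * π x - (1 / p) * (π x * f x)
                + ((1 - a) / (p + 3 * a)) * (π x * f x) := by
              intro x; ring
            simp_rw [this, sum_add_distrib, sum_sub_distrib, ← mul_sum, hπ1, hμ]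
            ring
        _ ≤ 1 := by
            have hpa : 0 < p + 3 * a := by linarith
            have : (1 - μ) * (1 / p) + μ * ((1 - a) / (p + 3 * a))
              = ((1 - μ) * (p + 3 * a) + μ * (1 - a) * p) / (p * (p + 3 * a)) := by
              field_simp
            rw [this, div_le_one (by positivity), hp]
            nlinarith [mul_nonneg (mul_nonneg ha0 hε0) (sub_nonneg.2 hμ1), sq_nonneg ε]
    set R := ∑ x, π x * (u x ^ 2 * ((p + 3 * a * f x) / (1 - a * f x))) with hR
    have hR0 : 0 ≤ R := sum_nonneg fun x _ => mul_nonneg (hπ x).le (mul_nonneg (sq_nonneg _)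
          (div_nonneg (hq x).le (hD0 x).le))
    have hle : (∑ x, π x * u x) ^ 2 ≤ R := cs.trans (mul_le_of_le_one_left hR0 hs)
    have hfin : ∑ x, π x * (u x ^ 2 * ((1 - ε) / (1 - a * f x)))
        = 1 / 4 * R + 3 / 4 * ∑ x, π x * u x ^ 2 := by
      rw [hR, mul_sum, mul_sum, ← sum_add_distrib]
      refine sum_congr rfl fun x _ => ?_
      have := (hD0 x).ne'
      rw [hp]
      field_simp
      ring
    rw [hfin]; linarith

/-- Backward value function: `F E w n k x` is the expectation, for the walk started at `x`
at time `k`, of the product of the weights `w k, …, w (k+n-1)`. -/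
def F (E : Matrix S S ℝ) (w : ℕ → S → ℝ) : ℕ → ℕ → S → ℝ
  | 0, _, _ => 1
  | n + 1, k, x => w k x * ∑ y, E x y * F E w n (k + 1) y

lemma F_one (E : Matrix S S ℝ) (hE1 : ∀ i, ∑ j, E i j = 1) (w : ℕ → S → ℝ) :
    ∀ n k, (∀ i, k ≤ i → i < k + n → w i = fun _ => 1) → F E w n k = fun _ => 1
  | 0, k, _ => rfl
  | n + 1, k, h => by
    have ih := F_one E hE1 w n (k + 1) (fun i h1 h2 => h i (by omega) (by omega))
    funext x
    simp [F, ih, h k le_rfl (by omega), hE1]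

lemma F_gap (E : Matrix S S ℝ) (w : ℕ → S → ℝ) (n : ℕ) :
    ∀ m k, (∀ i, k ≤ i → i < k + m → w i = fun _ => 1) →
      F E w (m + n) k = fun x => ∑ y, (E ^ m) x y * F E w n (k + m) y
  | 0, k, _ => by
    funext x
    simp [Matrix.one_apply]
  | m + 1, k, h => by
    have ih := F_gap E w n m (k + 1) (fun i h1 h2 => h i (by omega) (by omega))
    funext x
    have e : m + 1 + n = (m + n) + 1 := by omega
    have e2 : k + (m + 1) = k + 1 + m := by omega
    rw [e, F, ih, h k le_rfl (by omega), e2, pow_succ', one_mul]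
    simp_rw [Matrix.mul_apply, sum_mul, mul_sum]
    rw [sum_comm]
    exact sum_congr rfl fun y _ => sum_congr rfl fun z _ => by ring

lemma pow_props (E : Matrix S S ℝ) (π : S → ℝ)
    (hE0 : ∀ i j, 0 ≤ E i j) (hE1 : ∀ i, ∑ j, E i j = 1)
    (hst : ∀ j, ∑ i, π i * E i j = π j) (m : ℕ) :
    (∀ i j, 0 ≤ (E ^ m) i j) ∧ (∀ i, ∑ j, (E ^ m) i j = 1) ∧
      (∀ j, ∑ i, π i * (E ^ m) i j = π j) := by
  induction m with
  | zero => 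
    refine ⟨fun i j => ?_, fun i => ?_, fun j => ?_⟩
    · simp only [pow_zero, Matrix.one_apply]; split_ifs <;> norm_num
    · simp [Matrix.one_apply]
    · simp [Matrix.one_apply]
  | succ m ih =>
    obtain ⟨h0, h1, h2⟩ := ih
    refine ⟨fun i j => ?_, fun i => ?_, fun j => ?_⟩
    · rw [pow_succ, Matrix.mul_apply]
      exact sum_nonneg fun k _ => mul_nonneg (h0 _ _) (hE0 _ _)
    · simp_rw [pow_succ, Matrix.mul_apply]
      rw [sum_comm]
      simp_rw [← mul_sum, hE1, mul_one, h1]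
    · simp_rw [pow_succ, Matrix.mul_apply, mul_sum]
      rw [sum_comm]
      simp_rw [← mul_assoc, ← sum_mul, h2, hst]

/-- Weights active only on the residue class of `j` mod `T`. -/
def cls (T j : ℕ) (D : ℕ → S → ℝ) (i : ℕ) : S → ℝ := if i % T = j then D i else fun _ => 1

lemma class_bound_aux (E : Matrix S S ℝ) (π : S → ℝ)
    (hE0 : ∀ i j, 0 ≤ E i j) (hE1 : ∀ i, ∑ j, E i j = 1)
    (hπ : ∀ i, 0 < π i) (hπ1 : ∑ i, π i = 1) (hst : ∀ j, ∑ i, π i * E i j = π j)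
    (T : ℕ) (hT : 1 ≤ T) (hl : ∀ k, ∑ j, |(E ^ T) k j - π j| ≤ 1 / 4)
    (j : ℕ) (hj : j < T) (D : ℕ → S → ℝ) (hD : ∀ i, Good π (D i)) (n : ℕ) :
    ∀ k, k % T = j →
      ∑ x, π x * (D k x * (∑ y, E x y * F E (cls T j D) n (k + 1) y) ^ 2) ≤ 2 := by
  induction n using Nat.strong_induction_on with
  | _ n ih =>
  intro k hk
  have hoff : ∀ i, k + 1 ≤ i → i < k + T → cls T j D i = fun _ => 1 := by
    intro i h1 h2
    have : i % T ≠ j := by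
      intro h
      have h3 : (i - k) % T = 0 := by
        have : k ≡ i [MOD T] := by rw [Nat.ModEq, hk, h]
        exact Nat.mod_eq_zero_of_dvd ((Nat.modEq_iff_dvd' (by omega)).1 this)
      rw [Nat.mod_eq_of_lt (by omega)] at h3
      omega
    simp [cls, this]
  by_cases hn : n < T
  · rw [F_one E hE1 _ n (k + 1) (fun i h1 h2 => hoff i h1 (by omega))]
    simp only [mul_one, hE1, one_pow]
    calc ∑ x, π x * D k x ≤ ∑ x, π x * 2 :=
          sum_le_sum fun x _ => mul_le_mul_of_nonneg_left ((hD k).le x) (hπ x).le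
      _ = 2 := by rw [← sum_mul, hπ1]; norm_num
  · obtain ⟨n', rfl⟩ : ∃ n', n = (T - 1) + (n' + 1) := ⟨n - T, by omega⟩
    have hk' : (k + T) % T = j := by simpa using hk
    rw [F_gap E _ (n' + 1) (T - 1) (k + 1) (fun i h1 h2 => hoff i h1 (by omega))]
    have e : k + 1 + (T - 1) = k + T := by omega
    rw [e]
    have e2 : ∀ x, ∑ y, E x y * ∑ z, (E ^ (T - 1)) y z * F E (cls T j D) (n' + 1) (k + T) z
        = ∑ z, (E ^ T) x z * (D (k + T) z *
            ∑ y, E z y * F E (cls T j D) n' (k + T + 1) y) := by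
      intro x
      have : E ^ T = E * E ^ (T - 1) := by rw [← pow_succ']; congr 1; omega
      rw [this]
      have hc : cls T j D (k + T) = D (k + T) := by simp only [cls, hk', if_true]
      have hF : ∀ z, D (k + T) z * ∑ y, E z y * F E (cls T j D) n' (k + T + 1) y
          = F E (cls T j D) (n' + 1) (k + T) z := by
        intro z; rw [F, hc]
      simp_rw [hF]
      generalize F E (cls T j D) (n' + 1) (k + T) = R
      simp_rw [Matrix.mul_apply, sum_mul, mul_sum]
      rw [sum_comm]
      simp_rw [mul_assoc]
    simp_rw [e2]
    obtain ⟨h0, h1, h2⟩ := pow_props E π hE0 hE1 hst T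
    exact (block (E ^ T) π h0 h1 hπ hπ1 h2 hl _ _ (hD k) (hD (k + T)) _).trans
      (ih n' (by omega) (k + T) hk')

lemma class_bound (E : Matrix S S ℝ) (π : S → ℝ)
    (hE0 : ∀ i j, 0 ≤ E i j) (hE1 : ∀ i, ∑ j, E i j = 1)
    (hπ : ∀ i, 0 < π i) (hπ1 : ∑ i, π i = 1) (hst : ∀ j, ∑ i, π i * E i j = π j)
    (T : ℕ) (hT : 1 ≤ T) (hl : ∀ k, ∑ j, |(E ^ T) k j - π j| ≤ 1 / 4)
    (j : ℕ) (hj : j < T) (D : ℕ → S → ℝ) (hD : ∀ i, Good π (D i)) (n : ℕ)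
    (φ : S → ℝ) :
    ∑ x, φ x * F E (cls T j D) n 0 x ≤ 2 * Real.sqrt (∑ i, φ i ^ 2 / π i) := by
  have hoff : ∀ i, 0 ≤ i → i < 0 + j → cls T j D i = fun _ => 1 := by
    intro i _ h2
    have : i % T ≠ j := by rw [Nat.mod_eq_of_lt (by omega)]; omega
    simp [cls, this]
  have h4 : ∑ x, π x * F E (cls T j D) n 0 x ^ 2 ≤ 4 := by
    by_cases hn : n ≤ j
    · rw [F_one E hE1 _ n 0 (fun i h1 h2 => hoff i h1 (by omega))]
      simp [hπ1]
    · obtain ⟨n', rfl⟩ : ∃ n', n = j + (n' + 1) := ⟨n - j - 1, by omega⟩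
      rw [F_gap E _ (n' + 1) j 0 hoff, zero_add]
      obtain ⟨h0, h1, h2⟩ := pow_props E π hE0 hE1 hst j
      refine (jensen (E ^ j) π h0 h1 hπ h2 _).trans ?_
      have hjT := Nat.mod_eq_of_lt hj
      have hc : cls T j D j = D j := by simp only [cls, hjT, if_true]
      have h3 := class_bound_aux E π hE0 hE1 hπ hπ1 hst T hT hl j hj D hD n' j hjT
      simp_rw [F, hc]
      calc _ ≤ ∑ x, 2 * (π x *
            (D j x * (∑ y, E x y * F E (cls T j D) n' (j + 1) y) ^ 2)) := by
            refine sum_le_sum fun x _ => ?_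
            have a1 := (hD j).le x
            have a2 : 0 ≤ π x *
              (D j x * (∑ y, E x y * F E (cls T j D) n' (j + 1) y) ^ 2) :=
              mul_nonneg (hπ x).le (mul_nonneg ((hD j).pos x).le (sq_nonneg _))
            nlinarith
        _ ≤ 4 := by rw [← mul_sum]; linarith
  have cs : (∑ x, φ x * F E (cls T j D) n 0 x) ^ 2
      ≤ (∑ i, φ i ^ 2 / π i) * ∑ x, π x * F E (cls T j D) n 0 x ^ 2 := by
    refine sum_sq_le_sum_mul_sum_of_sq_eq_mul univ
      (fun k _ => div_nonneg (sq_nonneg _) (hπ k).le)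
      (fun k _ => mul_nonneg (hπ k).le (sq_nonneg _)) (fun k _ => ?_)
    have := (hπ k).ne'
    field_simp
  have h0 : 0 ≤ ∑ i, φ i ^ 2 / π i := sum_nonneg fun k _ => div_nonneg (sq_nonneg _) (hπ k).le
  refine le_of_sq_le_sq ?_ (by positivity)
  rw [mul_pow, Real.sq_sqrt h0]
  nlinarith

/-- Path sums agree with the backward value function. -/
lemma path_sum (E : Matrix S S ℝ) (hE1 : ∀ i, ∑ j, E i j = 1) (w : ℕ → S → ℝ) (n : ℕ) :
    ∀ (k : ℕ) (φ : S → ℝ),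
    ∑ v : Fin (n + 1) → S, (φ (v 0) * ∏ s : Fin (n + 1),
        (if h : s.val + 1 < n + 1 then E (v s) (v ⟨s.val + 1, h⟩) else 1))
        * ∏ s : Fin (n + 1), w (k + s) (v s)
      = ∑ x, φ x * F E w (n + 1) k x := by
  induction n with
  | zero =>
    intro k φ
    rw [← (Equiv.funUnique (Fin 1) S).symm.sum_comp]
    refine sum_congr rfl fun x _ => ?_
    simp [F, hE1]
  | succ n ih =>
    intro k φ
    rw [← (Fin.consEquiv (fun _ : Fin (n + 2) => S)).sum_comp, Fintype.sum_prod_type]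
    refine sum_congr rfl fun x _ => ?_
    rw [F, ← mul_assoc, ← ih (k + 1) (fun y => E x y), mul_sum]
    refine sum_congr rfl fun v _ => ?_
    rw [Fin.prod_univ_succ, Fin.prod_univ_succ (n := n + 1)]
    simp only [Fin.consEquiv, Equiv.coe_fn_mk, Fin.cons_zero, Fin.cons_succ, Fin.val_zero,
      Fin.val_succ]
    have e1 : (if h : 0 + 1 < n + 1 + 1 then
        E x ((Fin.cons x v : Fin (n + 2) → S) ⟨0 + 1, h⟩) else 1) = E x (v 0) := by
      rw [dif_pos (by omega)]; rfl
    have e2 : ∀ s : Fin (n + 1), (if h : s.val + 1 + 1 < n + 1 + 1 then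
        E (v s) ((Fin.cons x v : Fin (n + 2) → S) ⟨s.val + 1 + 1, h⟩) else 1)
        = (if h : s.val + 1 < n + 1 then E (v s) (v ⟨s.val + 1, h⟩) else 1) := by
      intro s
      by_cases h : s.val + 1 < n + 1
      · rw [dif_pos h, dif_pos (by omega)]; rfl
      · rw [dif_neg h, dif_neg (by omega)]
    have e3 : ∀ s : Fin (n + 1), w (k + (s.val + 1)) (v s) = w (k + 1 + s.val) (v s) := by
      intro s; rw [show k + (s.val + 1) = k + 1 + s.val by omega]
    erw [e1]
    simp_rw [e3]
    erw [prod_congr rfl fun s _ => e2 s]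
    simp only [add_zero]
    ring

end MC

/-- Chernoff–Hoeffding bound for Markov chains.  There is a constant
`c > 0` (independent of `μ` and `δ`) such that: for every finite state space `S`,
every row-stochastic ergodic transition matrix `E` on `S` with (strictly positive)
stationary distribution `π`, with mixing time
`T = min {t ≥ 1 : ∀ prob. dist. q, ‖q Eᵗ - π‖_TV ≤ 1/8}` (total variation distance
expressed as `max_{A ⊆ S} |∑_{i∈A} u i - ∑_{i∈A} w i|`, i.e. all `A` satisfy the
bound), every initial distribution `φ`, every `t ≥ 1`, every family of weight
functions `f i : S → [0,1]` with common expected weight `∑ v, π v * f i v = μ`, and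
every `0 ≤ δ ≤ 1`, the `t`-step random walk `(V 1, …, V t)` started from `φ`
(assigning to a path `v` probability `φ (v 1) * ∏_s E (v s) (v (s+1))`) satisfies
`Pr[∑ i, f i (V i) ≤ (1 - δ) μ t] ≤ c * ‖φ‖_π * exp (-δ² μ t / (72 T))`,
where `‖φ‖_π = sqrt (∑ i, φ i ^ 2 / π i)`. -/
theorem stmt_0 :
    ∃ c : ℝ, 0 < c ∧
      ∀ (S : Type) [Fintype S] [DecidableEq S]
        (E : Matrix S S ℝ) (π : S → ℝ),
        (∀ i j : S, 0 ≤ E i j) →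
        (∀ i : S, ∑ j, E i j = 1) →
        (∃ t : ℕ, 1 ≤ t ∧ ∀ i j : S, 0 < (E ^ t) i j) →
        (∀ i : S, 0 < π i) → (∑ i, π i = 1) →
        (∀ j : S, ∑ i, π i * E i j = π j) →
        ∀ T : ℕ,
          T = sInf {s : ℕ | 1 ≤ s ∧ ∀ q : S → ℝ, (∀ i, 0 ≤ q i) → (∑ i, q i = 1) →
              ∀ A : Finset S,
                |(∑ i ∈ A, ∑ k, q k * (E ^ s) k i) - ∑ i ∈ A, π i| ≤ 1 / 8} →
        ∀ φ : S → ℝ, (∀ i : S, 0 ≤ φ i) → (∑ i, φ i = 1) →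
        ∀ (t : ℕ) (ht : 1 ≤ t),
        ∀ (f : Fin t → S → ℝ) (μ : ℝ),
          (∀ (i : Fin t) (v : S), 0 ≤ f i v ∧ f i v ≤ 1) →
          (∀ i : Fin t, ∑ v, π v * f i v = μ) →
        ∀ δ : ℝ, 0 ≤ δ → δ ≤ 1 →
          (∑ v : Fin t → S,
              if ∑ i, f i (v i) ≤ (1 - δ) * μ * t then
                φ (v ⟨0, ht⟩) *
                  ∏ s : Fin t,
                    (if h : s.val + 1 < t then E (v s) (v ⟨s.val + 1, h⟩) else 1)
              else 0)
            ≤ c * Real.sqrt (∑ i, φ i ^ 2 / π i) *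
                Real.exp (-(δ ^ 2 * μ * t) / (72 * T)) := by
  refine ⟨2, by norm_num, ?_⟩
  intro S _ _ E π hE0 hE1 _ hπ hπ1 hst T hTdef φ hφ0 hφ1 t ht f μ hf hμ δ hδ0 hδ1
  obtain ⟨n, rfl⟩ : ∃ n, t = n + 1 := ⟨t - 1, by omega⟩
  have hW0 : ∀ v : Fin (n + 1) → S, 0 ≤ φ (v ⟨0, ht⟩) *
      ∏ s : Fin (n + 1), (if h : s.val + 1 < n + 1 then E (v s) (v ⟨s.val + 1, h⟩) else 1) := by
    intro v
    refine mul_nonneg (hφ0 _) (prod_nonneg fun s _ => ?_)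
    split_ifs
    · exact hE0 _ _
    · norm_num
  set W : (Fin (n + 1) → S) → ℝ := fun v => φ (v ⟨0, ht⟩) *
      ∏ s : Fin (n + 1), (if h : s.val + 1 < n + 1 then E (v s) (v ⟨s.val + 1, h⟩) else 1)
    with hW
  have hpath : ∀ w : ℕ → S → ℝ, ∑ v : Fin (n + 1) → S, W v * ∏ s : Fin (n + 1), w s (v s)
      = ∑ x, φ x * MC.F E w (n + 1) 0 x := by
    intro w
    rw [← MC.path_sum E hE1 w n 0 φ]
    simp only [zero_add]
    rfl
  have hnorm : 1 ≤ Real.sqrt (∑ i, φ i ^ 2 / π i) := by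
    rw [Real.one_le_sqrt]
    have cs : (∑ x, φ x) ^ 2 ≤ (∑ i, φ i ^ 2 / π i) * ∑ x, π x := by
      refine sum_sq_le_sum_mul_sum_of_sq_eq_mul univ
        (fun k _ => div_nonneg (sq_nonneg _) (hπ k).le)
        (fun k _ => (hπ k).le) (fun k _ => ?_)
      have := (hπ k).ne'
      field_simp
    rw [hφ1, hπ1] at cs
    linarith
  rcases Nat.eq_zero_or_pos T with hT0 | hT
  · -- trivial case
    subst hT0
    have h1 : ∑ v, W v = 1 := by
      have := hpath (fun _ _ => 1)
      rw [MC.F_one E hE1 _ _ _ (fun _ _ _ => rfl)] at this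
      simpa [hφ1] using this
    calc _ ≤ ∑ v, W v := by
          refine sum_le_sum fun v _ => ?_
          split_ifs
          · exact le_rfl
          · exact hW0 v
      _ ≤ _ := by
          rw [h1]; simp; linarith
  have hmem := Nat.sInf_mem (Nat.nonempty_of_pos_sInf (hTdef ▸ hT))
  rw [← hTdef] at hmem
  have hl : ∀ k, ∑ j, |(E ^ T) k j - π j| ≤ 1 / 4 := by
    intro k
    refine MC.l1_of_tv _ _ fun A => ?_
    have := hmem.2 (Pi.single k 1) (fun i => by
      by_cases h : i = k
      · subst h; simp
      · simp [h]) (by simp) A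
    simpa [Pi.single_apply] using this
  have hμ0 : 0 ≤ μ := by
    rw [← hμ ⟨0, ht⟩]
    exact sum_nonneg fun v _ => mul_nonneg (hπ v).le (hf _ v).1
  set r := δ / 10 with hr
  have hr0 : 0 ≤ r := by positivity
  set ε := r * μ / (1 + 5 * r) with hε
  set D : ℕ → S → ℝ := fun i x =>
    Real.exp (ε - r * f ⟨i % (n + 1), Nat.mod_lt _ (Nat.succ_pos n)⟩ x) with hD
  have hgood : ∀ i, MC.Good π (D i) := fun i =>
    MC.good_exp π _ μ r hπ hπ1 (hf _) (hμ _) hr0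
  have hTR : (0 : ℝ) < T := by exact_mod_cast hT
  have hcls : ∀ j ∈ range T, ∑ v, W v * ∏ s : Fin (n + 1), MC.cls T j D s (v s)
      ≤ 2 * Real.sqrt (∑ i, φ i ^ 2 / π i) := by
    intro j hj
    rw [hpath]
    exact MC.class_bound E π hE0 hE1 hπ hπ1 hst T hT hl j (mem_range.1 hj) D hgood _ φ
  -- Jensen for interleaved walks
  have hconv : ∀ v : Fin (n + 1) → S,
      Real.exp ((∑ i, (ε - r * f i (v i))) / T)
        ≤ ∑ j ∈ range T, (1 / (T : ℝ)) * ∏ s : Fin (n + 1), MC.cls T j D s (v s) := by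
    intro v
    have hprod : ∀ j, ∏ s : Fin (n + 1), MC.cls T j D s (v s)
        = Real.exp (∑ s : Fin (n + 1), if s.val % T = j then ε - r * f s (v s) else 0) := by
      intro j
      rw [Real.exp_sum]
      refine prod_congr rfl fun s _ => ?_
      have hs : (⟨s.val % (n + 1), Nat.mod_lt _ (Nat.succ_pos n)⟩ : Fin (n + 1)) = s :=
        Fin.ext (Nat.mod_eq_of_lt s.isLt)
      simp only [MC.cls]
      split_ifs
      · simp only [hD, hs]
      · simp
    have hsum : (∑ i, (ε - r * f i (v i))) / T
        = ∑ j ∈ range T, (1 / (T : ℝ)) •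
          (∑ s : Fin (n + 1), if s.val % T = j then ε - r * f s (v s) else 0) := by
      simp_rw [smul_eq_mul]
      rw [← mul_sum, sum_comm]
      rw [div_eq_inv_mul, one_div]
      congr 1
      refine sum_congr rfl fun s _ => ?_
      rw [sum_ite_eq, if_pos (mem_range.2 (Nat.mod_lt _ hT))]
    rw [hsum]
    simp_rw [hprod]
    have := convexOn_exp.map_sum_le (t := range T) (w := fun _ => 1 / (T : ℝ))
      (p := fun j => ∑ s : Fin (n + 1), if s.val % T = j then ε - r * f s (v s) else 0)
      (fun _ _ => by positivity) (by simp [hTR.ne']) (fun _ _ => Set.mem_univ _)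
    simpa only [smul_eq_mul] using this
  have hexpect : ∑ v, W v * Real.exp ((∑ i, (ε - r * f i (v i))) / T)
      ≤ 2 * Real.sqrt (∑ i, φ i ^ 2 / π i) := by
    calc _ ≤ ∑ v, W v * ∑ j ∈ range T, (1 / (T : ℝ)) *
            ∏ s : Fin (n + 1), MC.cls T j D s (v s) :=
          sum_le_sum fun v _ => mul_le_mul_of_nonneg_left (hconv v) (hW0 v)
      _ = ∑ j ∈ range T, (1 / (T : ℝ)) *
            ∑ v, W v * ∏ s : Fin (n + 1), MC.cls T j D s (v s) := by
          simp_rw [mul_sum]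
          rw [sum_comm]
          exact sum_congr rfl fun j _ => sum_congr rfl fun v _ => by ring
      _ ≤ ∑ j ∈ range T, (1 / (T : ℝ)) * (2 * Real.sqrt (∑ i, φ i ^ 2 / π i)) :=
          sum_le_sum fun j hj => mul_le_mul_of_nonneg_left (hcls j hj) (by positivity)
      _ = _ := by
          rw [sum_const, card_range, nsmul_eq_mul]; field_simp
  have hnum : δ ^ 2 * μ / 72 ≤ ε - r * ((1 - δ) * μ) := by
    have h1 : r * μ - 5 * r ^ 2 * μ ≤ ε := by
      rw [hε, le_div_iff₀ (by positivity)]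
      have : 0 ≤ r ^ 3 * μ := by positivity
      nlinarith
    have h2 : 0 ≤ δ ^ 2 * μ := by positivity
    rw [hr] at h1 ⊢
    nlinarith
  have hterm : ∀ v : Fin (n + 1) → S,
      (if ∑ i, f i (v i) ≤ (1 - δ) * μ * ((n + 1 : ℕ) : ℝ) then W v else 0)
      ≤ W v * Real.exp ((∑ i, (ε - r * f i (v i))) / T) *
        Real.exp (-(δ ^ 2 * μ * ((n + 1 : ℕ) : ℝ)) / (72 * T)) := by
    intro v
    split_ifs with h
    · rw [mul_assoc, ← Real.exp_add]
      refine le_mul_of_one_le_right (hW0 v) (Real.one_le_exp ?_)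
      have e : (∑ i, (ε - r * f i (v i))) / T + -(δ ^ 2 * μ * ((n + 1 : ℕ) : ℝ)) / (72 * T)
        = ((n + 1 : ℕ) * ε - r * ∑ i, f i (v i) - δ ^ 2 * μ / 72 * ((n + 1 : ℕ) : ℝ)) / T := by
        rw [sum_sub_distrib, ← mul_sum, sum_const, card_univ, Fintype.card_fin, nsmul_eq_mul]
        field_simp
        ring
      rw [e]
      refine div_nonneg ?_ hTR.le
      have h3 := mul_le_mul_of_nonneg_left h hr0
      have h4 := mul_le_mul_of_nonneg_right hnum (Nat.cast_nonneg (α := ℝ) (n + 1))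
      nlinarith
    · exact mul_nonneg (mul_nonneg (hW0 v) (Real.exp_pos _).le) (Real.exp_pos _).le
  calc _ ≤ ∑ v, W v * Real.exp ((∑ i, (ε - r * f i (v i))) / T) *
        Real.exp (-(δ ^ 2 * μ * ((n + 1 : ℕ) : ℝ)) / (72 * T)) :=
        sum_le_sum fun v _ => hterm v
    _ ≤ _ := by
        rw [← sum_mul]
        exact mul_le_mul_of_nonneg_right hexpect (Real.exp_pos _).le
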